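/- arXiv:2206.08276 — 3 statements merged into one kernel-verified Lean document; each statement's English description precedes it below -/
import Mathlib

section
/- Let G be a group, let k ≥ 0 and C ≥ 1 be integers, and let S ⊆ G be a subset of self-translate dimension ≤ k of complexity C. Let X_0, X_1, …, X_k be independent G-valued random elements, each with a discrete distribution, and set ρ_i = sup over g ∈ G of P(X_i = g). Then there is a constant K depending only on C and k such that P(X_0 X_1 ⋯ X_k ∈ S) ≤ K · max over 0 ≤ i ≤ k of ρ_i^{1/2^i}. -/
open scoped ENNReal NNReal BigOperators

universe u

/-- `S ⊆ G` has self-translate dimension `≤ k` of complexity `C`. -/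
inductive SelfTranslateDim {G : Type u} [Group G] (C : ℕ) : ℕ → Set G → Prop
  | base (S : Set G) (hfin : S.Finite) (hcard : Nat.card S ≤ C) : SelfTranslateDim C 0 S
  | step (k : ℕ) (S : Set G) (T : Fin C → Set G) (hS : S = ⋃ i, T i)
      (h : ∀ i (g : G), g ≠ 1 →
        SelfTranslateDim C k (T i ∩ ((fun x => g * x) '' T i))) :
      SelfTranslateDim C (k + 1) S

/-- The probability that the ordered product `X_0 X_1 ⋯ X_{n-1}` of independent random
elements `X_i ~ ν i` lies in `S`. -/
noncomputable def walkProb {G : Type u} [Group G] {n : ℕ} (ν : Fin n → PMF G)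
    (S : Set G) : ℝ≥0∞ :=
  ∑' v : Fin n → G, (∏ i, ν i (v i)) * S.indicator (fun _ => (1 : ℝ≥0∞)) (List.ofFn v).prod

theorem SelfTranslateDim.preimage_mul {G : Type u} [Group G] {C k : ℕ} {S : Set G}
    (h : SelfTranslateDim C k S) (x : G) : SelfTranslateDim C k {y | x * y ∈ S} := by
  induction h generalizing x with
  | base S hfin hcard =>
    have hinj : Function.Injective (fun y : G => x * y) := mul_right_injective x
    refine .base _ (hfin.preimage hinj.injOn) ?_
    refine le_trans ?_ hcard
    have := hfin.to_subtype
    exact Nat.card_le_card_of_injective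
      (fun y : {y | x * y ∈ S} => (⟨x * y.1, y.2⟩ : S))
      (fun a b hab => Subtype.ext (hinj (congrArg Subtype.val hab)))
  | step k S T hS h ih =>
    refine .step k _ (fun i => {y | x * y ∈ T i}) ?_ ?_
    · subst hS; ext y; simp
    · intro i g hg
      have h1 := ih i (x * g * x⁻¹) (by simpa using hg) x
      convert h1 using 1
      ext y
      simp only [Set.mem_inter_iff, Set.mem_ofPred_eq, Set.mem_image]
      refine and_congr_right fun _ => ⟨?_, ?_⟩
      · rintro ⟨z, hz, rfl⟩; exact ⟨x * z, hz, by group⟩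
      · rintro ⟨z, hz, e⟩
        refine ⟨x⁻¹ * z, by simpa using hz, ?_⟩
        apply mul_left_cancel (a := x)
        rw [← e]; group

theorem walkProb_succ {G : Type u} [Group G] {n : ℕ} (ν : Fin (n + 1) → PMF G) (S : Set G) :
    walkProb ν S = ∑' x, ν 0 x * walkProb (fun i => ν i.succ) {y | x * y ∈ S} := by
  unfold walkProb
  rw [← (Fin.consEquiv (fun _ : Fin (n + 1) => G)).tsum_eq, ENNReal.tsum_prod']
  refine tsum_congr fun x => ?_
  rw [← ENNReal.tsum_mul_left]
  refine tsum_congr fun w => ?_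
  simp only [Fin.consEquiv, Equiv.coe_fn_mk, Fin.prod_univ_succ, Fin.cons_zero, Fin.cons_succ,
    List.ofFn_succ, List.prod_cons, mul_assoc]
  rfl

theorem walkProb_univ {G : Type u} [Group G] {n : ℕ} (ν : Fin n → PMF G) :
    walkProb ν Set.univ = 1 := by
  induction n with
  | zero => simp [walkProb]
  | succ n ih =>
    rw [walkProb_succ]
    simp [ih, PMF.tsum_coe]

theorem walkProb_mono {G : Type u} [Group G] {n : ℕ} (ν : Fin n → PMF G) {S T : Set G}
    (h : S ⊆ T) : walkProb ν S ≤ walkProb ν T := by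
  unfold walkProb
  refine ENNReal.tsum_le_tsum fun v => mul_le_mul_right ?_ _
  exact Set.indicator_le_indicator_of_subset h (fun _ => zero_le) _

theorem walkProb_le_one {G : Type u} [Group G] {n : ℕ} (ν : Fin n → PMF G) (S : Set G) :
    walkProb ν S ≤ 1 :=
  (walkProb_mono ν (Set.subset_univ S)).trans (walkProb_univ ν).le

theorem walkProb_iUnion_le {G : Type u} [Group G] {n C : ℕ} (ν : Fin n → PMF G)
    (T : Fin C → Set G) : walkProb ν (⋃ i, T i) ≤ ∑ i, walkProb ν (T i) := by
  unfold walkProb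
  rw [← tsum_fintype (L := .unconditional _), ENNReal.tsum_comm]
  refine ENNReal.tsum_le_tsum fun v => ?_
  rw [tsum_fintype, ← Finset.mul_sum]
  refine mul_le_mul_right ?_ _
  by_cases hv : (List.ofFn v).prod ∈ ⋃ i, T i
  · obtain ⟨i, hi⟩ := Set.mem_iUnion.1 hv
    rw [Set.indicator_of_mem hv]
    calc (1 : ℝ≥0∞) = (T i).indicator (fun _ => 1) (List.ofFn v).prod := by
          rw [Set.indicator_of_mem hi]
      _ ≤ _ := Finset.single_le_sum
          (f := fun i => (T i).indicator (fun _ => (1 : ℝ≥0∞)) (List.ofFn v).prod)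
          (fun _ _ => zero_le) (Finset.mem_univ i)
  · rw [Set.indicator_of_notMem hv]; exact zero_le

theorem two_mul_mul_le_sq (a b : ℝ≥0∞) : 2 * (a * b) ≤ a * a + b * b := by
  rcases eq_or_ne a ⊤ with rfl | ha
  · simp
  rcases eq_or_ne b ⊤ with rfl | hb
  · simp
  lift a to ℝ≥0 using ha
  lift b to ℝ≥0 using hb
  norm_cast
  rw [← NNReal.coe_le_coe]
  push_cast
  nlinarith [sq_nonneg ((a : ℝ) - b)]

/-- Jensen and Cauchy-Schwarz for a sub-probability weight. -/
theorem sq_tsum_le {ι : Type*} (W a : ι → ℝ≥0∞) (hW : ∑' i, W i ≤ 1)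
    (hp : ∑' i, W i * a i ≠ ⊤) :
    (∑' i, W i * a i) * (∑' i, W i * a i) ≤ ∑' i, W i * (a i * a i) := by
  set p := ∑' i, W i * a i with hpdef
  have h1 : 2 * (p * p) ≤ p * p + ∑' i, W i * (a i * a i) := by
    calc 2 * (p * p) = ∑' i, W i * (2 * (p * a i)) := by
          nth_rewrite 2 [hpdef]
          rw [← ENNReal.tsum_mul_left, ← ENNReal.tsum_mul_left]
          exact tsum_congr fun i => by ring
      _ ≤ ∑' i, (W i * (p * p) + W i * (a i * a i)) := by
          refine ENNReal.tsum_le_tsum fun i => ?_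
          rw [← mul_add]
          exact mul_le_mul_right (two_mul_mul_le_sq _ _) _
      _ = (∑' i, W i) * (p * p) + ∑' i, W i * (a i * a i) := by
          rw [ENNReal.tsum_add, ENNReal.tsum_mul_right]
      _ ≤ _ := by
          refine add_le_add_left ?_ _
          exact mul_le_of_le_one_left zero_le hW
  rw [two_mul] at h1
  exact (ENNReal.add_le_add_iff_left (ENNReal.mul_ne_top hp hp)).1 h1

/-- The quadratic inequality for the probability of hitting `T`. -/
theorem walkProb_sq_le {G : Type u} [Group G] {n : ℕ} (ν : Fin (n + 1) → PMF G) (T : Set G)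
    (L : ℝ≥0∞)
    (hL : ∀ x x' : G, x ≠ x' →
      walkProb (fun i => ν i.succ) {y | x * y ∈ T ∧ x' * y ∈ T} ≤ L) :
    walkProb ν T * walkProb ν T ≤ (⨆ g, ν 0 g) * walkProb ν T + L := by
  classical
  set μ : Fin n → PMF G := fun i => ν i.succ with hμ
  set W : (Fin n → G) → ℝ≥0∞ := fun w => ∏ i, μ i (w i) with hWdef
  set e : G → (Fin n → G) → ℝ≥0∞ :=
    fun x w => T.indicator (fun _ => 1) (x * (List.ofFn w).prod) with he
  set a : (Fin n → G) → ℝ≥0∞ := fun w => ∑' x, ν 0 x * e x w with ha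
  have hp0 : walkProb ν T = ∑' x, ν 0 x * walkProb μ {y | x * y ∈ T} := walkProb_succ ν T
  have hp : walkProb ν T = ∑' w, W w * a w := by
    rw [hp0]
    simp only [ha, ← ENNReal.tsum_mul_left]
    rw [ENNReal.tsum_comm]
    refine tsum_congr fun x => ?_
    rw [walkProb, ← ENNReal.tsum_mul_left]
    refine tsum_congr fun w => ?_
    rw [mul_left_comm]
    rfl
  have hW : ∑' w, W w ≤ 1 := by
    have := walkProb_univ μ
    simp only [walkProb, Set.indicator_univ, mul_one] at this
    exact this.le
  have hfin : walkProb ν T ≠ ⊤ := ne_top_of_le_ne_top ENNReal.one_ne_top (walkProb_le_one ν T)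
  have hq : ∀ x x', ∑' w, W w * (e x w * e x' w) =
      walkProb μ {y | x * y ∈ T ∧ x' * y ∈ T} := by
    intro x x'
    rw [walkProb]
    refine tsum_congr fun w => ?_
    congr 1
    simp only [he, Set.indicator_apply, Set.mem_ofPred_eq]
    split_ifs <;> simp_all
  have hexp : ∑' w, W w * (a w * a w) = ∑' x, ν 0 x * ∑' x', ν 0 x' *
      walkProb μ {y | x * y ∈ T ∧ x' * y ∈ T} := by
    simp only [← hq, ← ENNReal.tsum_mul_left]
    have : ∀ w, W w * (a w * a w) =
        ∑' x, ∑' x', ν 0 x * (ν 0 x' * (W w * (e x w * e x' w))) := by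
      intro w
      simp only [ha]
      rw [← ENNReal.tsum_mul_right, ← ENNReal.tsum_mul_left]
      refine tsum_congr fun x => ?_
      rw [← ENNReal.tsum_mul_left, ← ENNReal.tsum_mul_left]
      refine tsum_congr fun x' => ?_
      ring
    simp only [this]
    rw [ENNReal.tsum_comm]
    refine tsum_congr fun x => ?_
    rw [ENNReal.tsum_comm]
  calc walkProb ν T * walkProb ν T ≤ ∑' w, W w * (a w * a w) := by
        rw [hp]; exact sq_tsum_le W a hW (hp ▸ hfin)
    _ = _ := hexp
    _ ≤ ∑' x, ν 0 x * ((⨆ g, ν 0 g) * walkProb μ {y | x * y ∈ T} + L) := by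
        refine ENNReal.tsum_le_tsum fun x => mul_le_mul_right ?_ _
        calc _ ≤ ∑' x', ((if x' = x then (⨆ g, ν 0 g) * walkProb μ {y | x * y ∈ T} else 0)
                + ν 0 x' * L) := by
              refine ENNReal.tsum_le_tsum fun x' => ?_
              by_cases hx : x' = x
              · subst hx
                simp only [and_self, if_true]
                exact le_add_of_le_of_nonneg
                  (mul_le_mul_left (le_iSup (fun g => ν 0 g) x') _) zero_le
              · simp only [hx, if_false, zero_add]
                exact mul_le_mul_right (hL x x' (Ne.symm hx)) _
          _ = _ := by
              rw [ENNReal.tsum_add, tsum_ite_eq, ENNReal.tsum_mul_right, PMF.tsum_coe, one_mul]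
    _ = (⨆ g, ν 0 g) * walkProb ν T + L := by
        rw [hp0]
        simp only [mul_add]
        rw [ENNReal.tsum_add, ENNReal.tsum_mul_right, PMF.tsum_coe, one_mul,
          ← ENNReal.tsum_mul_left]
        congr 1
        exact tsum_congr fun x => by ring

theorem le_of_quadratic (p B : ℝ≥0∞) (K : ℝ≥0) (hp : p ≠ ⊤)
    (h : p * p ≤ B * p + K * (B * B)) : p ≤ ((K + 1 : ℝ≥0) : ℝ≥0∞) * B := by
  rcases eq_or_ne B ⊤ with rfl | hB
  · rw [ENNReal.mul_top (by simp)]; exact le_top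
  lift p to ℝ≥0 using hp
  lift B to ℝ≥0 using hB
  norm_cast at h ⊢
  rw [← NNReal.coe_le_coe] at h ⊢
  push_cast at h ⊢
  by_contra! hlt
  have hB := B.coe_nonneg
  have hK := K.coe_nonneg
  have hKB := mul_nonneg hK hB
  have h1 : (B : ℝ) ≤ p := by nlinarith
  have h2 : (0 : ℝ) < p := by nlinarith
  nlinarith [mul_lt_mul_of_pos_right hlt h2, mul_le_mul_of_nonneg_left h1 hKB]

theorem walkProb_base {G : Type u} [Group G] {C : ℕ} (ν : Fin (0 + 1) → PMF G) (S : Set G)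
    (hfin : S.Finite) (hcard : Nat.card S ≤ C) :
    walkProb ν S ≤ (C : ℝ≥0∞) * ⨆ g, ν 0 g := by
  classical
  rw [walkProb_succ]
  have h0 : ∀ x, walkProb (fun i : Fin 0 => ν i.succ) {y | x * y ∈ S} =
      S.indicator (fun _ => 1) x := by
    intro x
    simp [walkProb, Set.indicator_apply]
  simp only [h0]
  calc ∑' x, ν 0 x * S.indicator (fun _ => 1) x
      = ∑ x ∈ hfin.toFinset, ν 0 x * S.indicator (fun _ => 1) x := by
        refine tsum_eq_sum fun x hx => ?_
        rw [Set.indicator_of_notMem (by simpa using hx), mul_zero]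
    _ ≤ ∑ x ∈ hfin.toFinset, ⨆ g, ν 0 g := by
        refine Finset.sum_le_sum fun x hx => ?_
        rw [Set.indicator_of_mem (by simpa using hx), mul_one]
        exact le_iSup (fun g => ν 0 g) x
    _ ≤ _ := by
        rw [Finset.sum_const, nsmul_eq_mul]
        refine mul_le_mul_left ?_ _
        rw [Nat.card_coe_set_eq, Set.ncard_eq_toFinset_card _ hfin] at hcard
        exact_mod_cast hcard

/-- If `S ⊆ G` has self-translate dimension `≤ k` of complexity `C`, and `X_0, …, X_k` are
independent `G`-valued random elements with `ρ_i = sup_g P(X_i = g)`, then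
`P(X_0 X_1 ⋯ X_k ∈ S) ≤ K · max_i ρ_i^{1/2^i}` for a constant `K = K(C, k)`. -/
theorem selfTranslateDim_prod_mem_le (C k : ℕ) (hC : 1 ≤ C) :
    ∃ K : ℝ≥0, ∀ (G : Type u) [Group G] (ν : Fin (k + 1) → PMF G) (S : Set G),
      SelfTranslateDim C k S →
      walkProb ν S ≤
        (K : ℝ≥0∞) * ⨆ i : Fin (k + 1), (⨆ g : G, ν i g) ^ ((1 : ℝ) / 2 ^ (i : ℕ)) := by
  clear hC
  induction k with
  | zero =>
    refine ⟨C, fun G _ ν S hS => ?_⟩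
    cases hS with
    | base _ hfin hcard =>
      refine (walkProb_base ν S hfin hcard).trans ?_
      refine mul_le_mul' (by simp) ?_
      refine le_iSup_of_le 0 ?_
      simp
  | succ k ih =>
    obtain ⟨K, hK⟩ := ih
    refine ⟨C * (K + 1), fun G _ ν S hS => ?_⟩
    cases hS with
    | step _ _ T hS h =>
      set B : ℝ≥0∞ := ⨆ i : Fin (k + 1 + 1), (⨆ g : G, ν i g) ^ ((1 : ℝ) / 2 ^ (i : ℕ)) with hB
      have hB0 : (⨆ g, ν 0 g) ≤ B := le_iSup_of_le 0 (by simp)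
      have hM : (⨆ i : Fin (k + 1), (⨆ g : G, ν i.succ g) ^ ((1 : ℝ) / 2 ^ (i : ℕ))) ≤ B * B := by
        refine iSup_le fun i => ?_
        have h1 : (⨆ g : G, ν i.succ g) ^ ((1 : ℝ) / 2 ^ ((i.succ : Fin (k + 1 + 1)) : ℕ)) ≤ B :=
          le_iSup (fun i : Fin (k + 1 + 1) => (⨆ g : G, ν i g) ^ ((1 : ℝ) / 2 ^ (i : ℕ))) i.succ
        refine le_trans (le_of_eq ?_) (mul_le_mul' h1 h1)
        rw [← ENNReal.rpow_add_of_nonneg _ _ (by positivity) (by positivity)]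
        congr 1
        rw [Fin.val_succ, pow_succ]
        field_simp
        norm_num
      have hT : ∀ i, walkProb ν (T i) ≤ ((K + 1 : ℝ≥0) : ℝ≥0∞) * B := by
        intro i
        refine le_of_quadratic _ _ _
          (ne_top_of_le_ne_top ENNReal.one_ne_top (walkProb_le_one ν _)) ?_
        refine (walkProb_sq_le ν (T i) (K * (B * B)) ?_).trans
          (add_le_add_left (mul_le_mul_left hB0 _) _)
        intro x x' hx
        have hne : x * x'⁻¹ ≠ 1 := fun e => hx (mul_inv_eq_one.1 e)
        have h1 := hK G (fun i => ν i.succ) _ ((h i (x * x'⁻¹) hne).preimage_mul x)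
        refine le_trans (walkProb_mono _ ?_) (h1.trans (mul_le_mul_right hM _))
        rintro y ⟨hy, hy'⟩
        exact ⟨hy, x' * y, hy', by simp [mul_assoc]⟩
      rw [hS]
      refine (walkProb_iUnion_le ν T).trans ?_
      refine (Finset.sum_le_sum fun i _ => hT i).trans (le_of_eq ?_)
      rw [Finset.sum_const, nsmul_eq_mul]
      simp [mul_assoc]
end

section
/- Let G be a group, let k ≥ 0 and C ≥ 1 be integers, and let S ⊆ G be a subset of self-translate dimension ≤ k of complexity C. Then there exists a positive integer N depending only on C and k such that for every m ≥ N there do NOT exist subsets A_1, …, A_{k+1} ⊆ G with |A_i| = m for all i and with a_1 a_2 ⋯ a_{k+1} ∈ S for every choice of a_i ∈ A_i. In particular, the robust multiplicative dimension of S is at most its self-translate dimension. -/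
universe u

/-- `S` robustly contains `r`-dimensional multiplicative structure: for every `C` there are
finite sets `A_1, …, A_r ⊆ G` of size `C` with every ordered product `a_1 ⋯ a_r ∈ S`. -/
def RobustlyContains {G : Type u} [Group G] (S : Set G) (r : ℕ) : Prop :=
  ∀ C : ℕ, ∃ A : Fin r → Finset G, (∀ i, (A i).card = C) ∧
    ∀ a : Fin r → G, (∀ i, a i ∈ A i) → (List.ofFn a).prod ∈ S

/-- The robust multiplicative dimension of `S`. -/
noncomputable def dimRob {G : Type u} [Group G] (S : Set G) : ℕ∞ :=
  ⨆ r ∈ {r : ℕ | RobustlyContains S r}, (r : ℕ∞)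

/-- The self-translate dimension of `S`. -/
noncomputable def dimSelf {G : Type u} [Group G] (S : Set G) : ℕ∞ :=
  ⨅ k ∈ {k : ℕ | ∃ C : ℕ, SelfTranslateDim C k S}, (k : ℕ∞)

/-- Partite Ramsey: large grids contain monochromatic subgrids. -/
lemma grid_ramsey (r : ℕ) : ∀ (K : Type) [Finite K] [Nonempty K] (M : ℕ), ∃ N : ℕ,
    ∀ (G : Type u) (A : Fin r → Finset G), (∀ i, N ≤ (A i).card) →
    ∀ c : (Fin r → G) → K, ∃ B : Fin r → Finset G, (∀ i, B i ⊆ A i) ∧ (∀ i, (B i).card = M) ∧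
      ∃ κ, ∀ b : Fin r → G, (∀ i, b i ∈ B i) → c b = κ := by
  induction r with
  | zero =>
    intro K _ _ M
    refine ⟨0, fun G A _ c => ⟨A, fun i => i.elim0, fun i => i.elim0, c Fin.elim0, ?_⟩⟩
    intro b _
    congr 1
    exact Subsingleton.elim _ _
  | succ r ih =>
    intro K _ _ M
    classical
    have := Fintype.ofFinite K
    obtain ⟨N', hN'⟩ := ih (Fin (Fintype.card K * M) → K) M
    refine ⟨max (Fintype.card K * M) N', fun G A hA c => ?_⟩
    obtain ⟨A0, hA0, hcard⟩ := Finset.exists_subset_card_eq ((le_max_left _ _).trans (hA 0))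
    let f : Fin (Fintype.card K * M) → G := fun j => (A0.equivFinOfCardEq hcard).symm j
    have hf : Function.Injective f :=
      Subtype.val_injective.comp (A0.equivFinOfCardEq hcard).symm.injective
    have hfA : ∀ j, f j ∈ A 0 := fun j => hA0 ((A0.equivFinOfCardEq hcard).symm j).2
    obtain ⟨B, hBA, hBc, κ, hκ⟩ := hN' G (fun i => A i.succ)
      (fun i => (le_max_right _ _).trans (hA i.succ)) (fun t j => c (Fin.cons (f j) t))
    obtain ⟨y, hy⟩ := Fintype.exists_le_card_fiber_of_mul_le_card (n := M) κ (by simp)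
    obtain ⟨J, hJ, hJc⟩ := Finset.exists_subset_card_eq hy
    refine ⟨Fin.cons (J.image f) B, ?_, ?_, y, ?_⟩
    · intro i
      refine Fin.cases ?_ (fun i => ?_) i
      · intro x hx
        simp only [Fin.cons_zero, Finset.mem_image] at hx
        obtain ⟨j, _, rfl⟩ := hx
        exact hfA j
      · simpa using hBA i
    · intro i
      refine Fin.cases ?_ (fun i => ?_) i
      · simp [Finset.card_image_of_injective _ hf, hJc]
      · simpa using hBc i
    · intro b hb
      have h0 := hb 0
      simp only [Fin.cons_zero, Finset.mem_image] at h0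
      obtain ⟨j, hj, hjb⟩ := h0
      have h1 := hκ (Fin.tail b) (fun i => by simpa [Fin.tail] using hb i.succ)
      have h2 := congrFun h1 j
      simp only [hjb, Fin.cons_self_tail] at h2
      rw [h2]
      simpa using hJ hj

lemma no_large_grids (C k : ℕ) :
    ∃ N : ℕ, 0 < N ∧ ∀ (G : Type u) [Group G] (S : Set G), SelfTranslateDim C k S →
      ∀ m : ℕ, N ≤ m →
        ¬ ∃ A : Fin (k + 1) → Finset G, (∀ i, (A i).card = m) ∧
          ∀ a : Fin (k + 1) → G, (∀ i, a i ∈ A i) → (List.ofFn a).prod ∈ S := by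
  induction k with
  | zero =>
    refine ⟨C + 1, by omega, ?_⟩
    rintro G _ S hS m hm ⟨A, hA, h⟩
    cases hS with
    | base _ hfin hcard =>
      have hsub : (A 0 : Set G) ⊆ S := by
        intro x hx
        have := h (fun _ => x) (fun i => by rw [show i = 0 from Fin.ext (by simp)]; exact hx)
        simpa using this
      have h1 := Set.ncard_le_ncard hsub hfin
      rw [Set.ncard_coe_finset, hA 0, ← Nat.card_coe_set_eq] at h1
      omega
  | succ k ih =>
    obtain ⟨M, hM, ih⟩ := ih
    obtain ⟨N, hN⟩ := grid_ramsey.{u} (k + 1) (Fin (C + 1) × Fin (C + 1) × Fin (C + 1)) M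
    refine ⟨max (C + 1) N, by omega, ?_⟩
    rintro G _ S hS m hm ⟨A, hA, h⟩
    classical
    cases hS with
    | step _ _ T hT hd =>
      obtain ⟨A0, hA0, hcard⟩ := Finset.exists_subset_card_eq
        (s := A 0) (n := C + 1) (by rw [hA 0]; omega)
      let f : Fin (C + 1) → G := fun j => (A0.equivFinOfCardEq hcard).symm j
      have hf : Function.Injective f :=
        Subtype.val_injective.comp (A0.equivFinOfCardEq hcard).symm.injective
      have hfA : ∀ j, f j ∈ A 0 := fun j => hA0 ((A0.equivFinOfCardEq hcard).symm j).2
      have key : ∀ t : Fin (k + 1) → G, ∃ κ : Fin (C + 1) × Fin (C + 1) × Fin (C + 1),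
          (∀ i, t i ∈ A i.succ) → κ.1 ≠ κ.2.1 ∧ ∃ i : Fin C, i.castSucc = κ.2.2 ∧
            f κ.1 * (List.ofFn t).prod ∈ T i ∧ f κ.2.1 * (List.ofFn t).prod ∈ T i := by
        intro t
        by_cases ht : ∀ i, t i ∈ A i.succ
        · have h1 : ∀ j, ∃ i, f j * (List.ofFn t).prod ∈ T i := by
            intro j
            have := h (Fin.cons (f j) t) (fun i => by
              refine Fin.cases ?_ (fun i => ?_) i
              · simpa using hfA j
              · simpa using ht i)
            rw [List.ofFn_cons, List.prod_cons, hT] at this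
            simpa using this
          choose g hg using h1
          obtain ⟨x, y, hxy, hgxy⟩ := Fintype.exists_ne_map_eq_of_card_lt g (by simp)
          exact ⟨(x, y, (g x).castSucc), fun _ => ⟨hxy, g x, rfl, hg x, hgxy ▸ hg y⟩⟩
        · exact ⟨(0, 0, 0), fun h => absurd h ht⟩
      choose c hc using key
      obtain ⟨B, hBA, hBc, κ, hκ⟩ := hN G (fun i => A i.succ)
        (fun i => by rw [hA]; omega) c
      have hB : ∀ b : Fin (k + 1) → G, (∀ i, b i ∈ B i) → κ.1 ≠ κ.2.1 ∧
          ∃ i : Fin C, i.castSucc = κ.2.2 ∧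
            f κ.1 * (List.ofFn b).prod ∈ T i ∧ f κ.2.1 * (List.ofFn b).prod ∈ T i := by
        intro b hb
        have := hc b (fun i => hBA i (hb i))
        rwa [hκ b hb] at this
      have hne : ∀ i, (B i).Nonempty := fun i => Finset.card_pos.1 (by rw [hBc]; exact hM)
      choose b0 hb0 using hne
      obtain ⟨hκne, i, hi, _⟩ := hB b0 hb0
      have hg : f κ.1 * (f κ.2.1)⁻¹ ≠ 1 := fun e => hκne (hf (mul_inv_eq_one.1 e))
      refine ih G _ (hd i _ hg) M le_rfl
        ⟨Fin.cons ((B 0).image (fun x => f κ.1 * x)) (fun j => B j.succ), ?_, ?_⟩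
      · intro j
        refine Fin.cases ?_ (fun j => ?_) j
        · rw [Fin.cons_zero, Finset.card_image_of_injective _ (mul_right_injective (f κ.1)), hBc]
        · simpa using hBc j.succ
      · intro a ha
        have h0 := ha 0
        simp only [Fin.cons_zero, Finset.mem_image] at h0
        obtain ⟨x, hx, hxa⟩ := h0
        obtain ⟨_, i', hi', h1, h2⟩ := hB (Fin.cons x (Fin.tail a)) (fun j => by
          refine Fin.cases ?_ (fun j => ?_) j
          · simpa using hx
          · simpa [Fin.tail] using ha j.succ)
        have hii : i' = i := Fin.castSucc_injective _ (hi'.trans hi.symm)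
        subst hii
        have ea : (List.ofFn a).prod = f κ.1 * (List.ofFn (Fin.cons x (Fin.tail a) : Fin (k+1) → G)).prod := by
          conv_lhs => rw [← Fin.cons_self_tail a]
          rw [List.ofFn_cons, List.ofFn_cons, List.prod_cons, List.prod_cons, ← hxa, mul_assoc]
        rw [ea]
        exact ⟨h1, _, h2, by group⟩

lemma RobustlyContains.pred {G : Type u} [Group G] {S : Set G} {r : ℕ}
    (h : RobustlyContains S (r + 2)) : RobustlyContains S (r + 1) := by
  classical
  intro C
  obtain ⟨A, hA, hS⟩ := h C
  rcases Nat.eq_zero_or_pos C with rfl | hC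
  · exact ⟨fun _ => ∅, by simp, fun a ha => by simpa using ha 0⟩
  obtain ⟨g, hg⟩ : (A 0).Nonempty := Finset.card_pos.1 (by rw [hA]; exact hC)
  refine ⟨Fin.cons ((A 1).image (fun x => g * x)) (fun j => A j.succ.succ), ?_, ?_⟩
  · intro j
    refine Fin.cases ?_ (fun j => ?_) j
    · rw [Fin.cons_zero, Finset.card_image_of_injective _ (mul_right_injective g), hA]
    · simpa using hA j.succ.succ
  · intro a ha
    have h0 := ha 0
    simp only [Fin.cons_zero, Finset.mem_image] at h0
    obtain ⟨x, hx, hxa⟩ := h0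
    have := hS (Fin.cons g (Fin.cons x (Fin.tail a) : Fin (r + 1) → G)) (fun j => by
      refine Fin.cases ?_ (fun j => Fin.cases ?_ (fun j => ?_) j) j
      · simpa using hg
      · simpa using hx
      · simpa [Fin.tail] using ha j.succ)
    rw [List.ofFn_cons, List.ofFn_cons, List.prod_cons, List.prod_cons, ← mul_assoc, hxa] at this
    rw [← Fin.cons_self_tail a, List.ofFn_cons, List.prod_cons]
    exact this

lemma RobustlyContains.mono {G : Type u} [Group G] {S : Set G} {r : ℕ} (d : ℕ)
    (h : RobustlyContains S (r + 1 + d)) : RobustlyContains S (r + 1) := by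
  induction d with
  | zero => exact h
  | succ d ih =>
    apply ih
    have e : r + 1 + (d + 1) = (r + d) + 2 := by omega
    have e' : r + 1 + d = (r + d) + 1 := by omega
    rw [e] at h
    rw [e']
    exact h.pred

/-- If `S ⊆ G` has self-translate dimension `≤ k` of complexity `C`, then there is
`N = N(C, k)` such that for all `m ≥ N` there are no sets `A_1, …, A_{k+1} ⊆ G` of size `m`
all of whose ordered products `a_1 ⋯ a_{k+1}` lie in `S`; in particular
`dimRob S ≤ dimSelf S`. -/
theorem selfTranslateDim_no_large_grids (C k : ℕ) (hC : 1 ≤ C) :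
    ∃ N : ℕ, 0 < N ∧ ∀ (G : Type u) [Group G] (S : Set G), SelfTranslateDim C k S →
      (∀ m : ℕ, N ≤ m →
        ¬ ∃ A : Fin (k + 1) → Finset G, (∀ i, (A i).card = m) ∧
          ∀ a : Fin (k + 1) → G, (∀ i, a i ∈ A i) → (List.ofFn a).prod ∈ S) ∧
      dimRob S ≤ dimSelf S := by
  obtain ⟨N, hN, h⟩ := no_large_grids.{u} C k
  refine ⟨N, hN, fun G _ S hS => ⟨h G S hS, ?_⟩⟩
  refine iSup₂_le fun r hr => le_iInf₂ fun k' hk' => ?_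
  obtain ⟨C', hS'⟩ := hk'
  by_contra hlt
  have hlt' : k' < r := by
    simpa using hlt
  obtain ⟨d, rfl⟩ := Nat.exists_eq_add_of_le (Nat.succ_le_of_lt hlt')
  obtain ⟨N', _, h'⟩ := no_large_grids.{u} C' k'
  exact h' G S hS' N' le_rfl (RobustlyContains.mono d hr N')
end

section
/- Let G be a group and S ⊆ G. Then S has self-translate dimension ≤ k of complexity 1 if and only if S contains no product set of the form {a_1, b_1} · {a_2, b_2} · ⋯ · {a_{k+1}, b_{k+1}} with a_i ≠ b_i for all i (where the product set consists of all products c_1 c_2 ⋯ c_{k+1} with c_i ∈ {a_i, b_i}); equivalently, S contains no product set of the form a · {id_G, x_1} · {id_G, x_2} · ⋯ · {id_G, x_{k+1}} with a ∈ G and x_i ≠ id_G for all i. -/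
universe u

theorem std_aux_not {G : Type u} [Group G] (k : ℕ) : ∀ (S : Set G) (u : G)
    (a b : Fin (k + 1) → G), (∀ i, a i ≠ b i) →
    (∀ c : Fin (k + 1) → G, (∀ i, c i = a i ∨ c i = b i) → u * (List.ofFn c).prod ∈ S) →
    ¬ SelfTranslateDim 1 k S := by
  induction k with
  | zero =>
    intro S u a b hab h hd
    cases hd with
    | base _ hfin hcard =>
      have h1 := h a (fun i => Or.inl rfl)
      have h2 := h b (fun i => Or.inr rfl)
      have : Finite S := hfin
      have hs := Finite.card_le_one_iff_subsingleton.mp hcard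
      have := congrArg Subtype.val (hs.elim ⟨_, h1⟩ ⟨_, h2⟩)
      simp at this
      exact hab 0 this
  | succ k ih =>
    intro S u a b hab h hd
    cases hd with
    | step _ _ T hS hT =>
      have hS' : S = T 0 := by rw [hS]; ext x; simp
      have hg : u * b 0 * (a 0)⁻¹ * u⁻¹ ≠ 1 := by
        intro hg
        apply hab 0
        have h1 : u * b 0 = u * a 0 := by
          calc u * b 0 = (u * b 0 * (a 0)⁻¹ * u⁻¹) * (u * a 0) := by group
            _ = _ := by rw [hg, one_mul]
        exact (mul_left_cancel h1).symm
      refine ih _ (u * b 0) (fun i => a i.succ) (fun i => b i.succ) (fun i => hab _) ?_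
        (hT 0 _ hg)
      intro c hc
      rw [← hS']
      have key : ∀ y, (y = a 0 ∨ y = b 0) → u * (y * (List.ofFn c).prod) ∈ S := by
        intro y hy
        have := h (Fin.cons y c) (fun i => by
          refine Fin.cases ?_ (fun j => ?_) i
          · simpa using hy
          · simpa using hc j)
        simpa [List.ofFn_succ] using this
      refine ⟨?_, u * (a 0 * (List.ofFn c).prod), key _ (Or.inl rfl), ?_⟩
      · simpa [mul_assoc] using key _ (Or.inr rfl)
      · simp [mul_assoc]

theorem std_aux_exists {G : Type u} [Group G] (k : ℕ) : ∀ (S : Set G),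
    ¬ SelfTranslateDim 1 k S →
    ∃ (a : G) (x : Fin (k + 1) → G), (∀ i, x i ≠ 1) ∧
        ∀ e : Fin (k + 1) → G, (∀ i, e i = 1 ∨ e i = x i) →
          a * (List.ofFn e).prod ∈ S := by
  induction k with
  | zero =>
    intro S hS
    have hn : ¬ S.Subsingleton := by
      intro hs
      refine hS (.base S hs.finite ?_)
      have : Subsingleton S := hs.coe_sort
      exact Finite.card_le_one_iff_subsingleton.mpr this
    rw [Set.not_subsingleton_iff] at hn
    obtain ⟨p, hp, q, hq, hpq⟩ := hn
    refine ⟨p, fun _ => p⁻¹ * q, fun _ h => hpq (inv_mul_eq_one.mp h), fun e he => ?_⟩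
    rcases he 0 with h | h <;> simpa [h]
  | succ k ih =>
    intro S hS
    have : ∃ g : G, g ≠ 1 ∧ ¬ SelfTranslateDim 1 k (S ∩ ((fun x => g * x) '' S)) := by
      by_contra hcon
      push Not at hcon
      exact hS (.step k S (fun _ => S) (by ext x; simp) (fun _ g hg => hcon g hg))
    obtain ⟨g, hg, hd⟩ := this
    obtain ⟨a, x, hx, h⟩ := ih _ hd
    refine ⟨a, Fin.cons (a⁻¹ * g⁻¹ * a) x, fun i => ?_, fun e he => ?_⟩
    · refine Fin.cases ?_ (fun j => ?_) i
      · intro h0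
        apply hg
        simp only [Fin.cons_zero] at h0
        calc g = (a * (a⁻¹ * g⁻¹ * a) * a⁻¹)⁻¹ := by group
          _ = 1 := by rw [h0]; group
      · simpa using hx j
    · obtain ⟨h1, y, hy, hgy⟩ := h (fun i => e i.succ) (fun i => by simpa using he i.succ)
      rw [List.ofFn_succ, List.prod_cons]
      rcases he 0 with h0 | h0
      · simpa [h0] using h1
      · simp only [Fin.cons_zero] at h0
        have hyy : y = g⁻¹ * (a * (List.ofFn fun i => e i.succ).prod) := by
          rw [← hgy]; simp
        rw [h0]
        rw [hyy] at hy
        simpa [mul_assoc] using hy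

theorem std_aux_conv {G : Type u} [Group G] (k : ℕ) (S : Set G)
    (h : ∃ (a : G) (x : Fin (k + 1) → G), (∀ i, x i ≠ 1) ∧
        ∀ e : Fin (k + 1) → G, (∀ i, e i = 1 ∨ e i = x i) →
          a * (List.ofFn e).prod ∈ S) :
    ∃ a b : Fin (k + 1) → G, (∀ i, a i ≠ b i) ∧
        ∀ c : Fin (k + 1) → G, (∀ i, c i = a i ∨ c i = b i) → (List.ofFn c).prod ∈ S := by
  obtain ⟨a, x, hx, h⟩ := h
  refine ⟨Fin.cons a (fun _ => 1), Fin.cons (a * x 0) (fun i => x i.succ), fun i => ?_,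
    fun c hc => ?_⟩
  · refine Fin.cases ?_ (fun j => ?_) i
    · simpa using hx 0
    · simpa using (hx j.succ).symm
  · have := h (Fin.cons (a⁻¹ * c 0) (fun i => c i.succ)) (fun i => by
      refine Fin.cases ?_ (fun j => ?_) i
      · rcases hc 0 with h0 | h0 <;> simp [h0]
      · simpa using hc j.succ)
    simpa [List.ofFn_succ, mul_assoc] using this


/-- `S` has self-translate dimension `≤ k` of complexity `1` if and only if `S` contains no
product set `{a_1, b_1} ⋯ {a_{k+1}, b_{k+1}}` with `a_i ≠ b_i` for all `i`; equivalently,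
`S` contains no product set `a · {1, x_1} ⋯ {1, x_{k+1}}` with `x_i ≠ 1` for all `i`. -/
theorem selfTranslateDim_one_iff {G : Type u} [Group G] (k : ℕ) (S : Set G) :
    (SelfTranslateDim 1 k S ↔
      ¬ ∃ a b : Fin (k + 1) → G, (∀ i, a i ≠ b i) ∧
        ∀ c : Fin (k + 1) → G, (∀ i, c i = a i ∨ c i = b i) → (List.ofFn c).prod ∈ S) ∧
    (SelfTranslateDim 1 k S ↔
      ¬ ∃ (a : G) (x : Fin (k + 1) → G), (∀ i, x i ≠ 1) ∧
        ∀ e : Fin (k + 1) → G, (∀ i, e i = 1 ∨ e i = x i) →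
          a * (List.ofFn e).prod ∈ S) := by

  have hA : (∃ a b : Fin (k + 1) → G, (∀ i, a i ≠ b i) ∧
        ∀ c : Fin (k + 1) → G, (∀ i, c i = a i ∨ c i = b i) → (List.ofFn c).prod ∈ S) →
      ¬ SelfTranslateDim 1 k S := by
    rintro ⟨a, b, hab, h⟩
    exact std_aux_not k S 1 a b hab (fun c hc => by simpa using h c hc)
  have hB := std_aux_exists k S
  have hC := std_aux_conv k S
  refine ⟨⟨fun h h' => hA h' h, fun h => ?_⟩, ⟨fun h h' => hA (hC h') h, fun h => ?_⟩⟩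
  · by_contra hd
    exact h (hC (hB hd))
  · by_contra hd
    exact h (hB hd)
end
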